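/- Let Ω ⊆ D(0, r) be an open set with 0 a non-isolated boundary point, Γ = ∂Ω ∩ D(0, r), and let S be holomorphic on Ω, continuous on Ω ∪ Γ, bounded on Ω, and satisfying S(ζ) = conj(ζ)·ζ^n for all ζ ∈ Γ. Then lim_{z → 0, z ∈ Ω ∪ Γ \ {0}} S(z)/z^n = 0. -/

import Mathlib

open Complex Metric Set Filter

open scoped Topology


/-- `f` has Wirtinger derivatives `a = ∂f` and `b = ∂̄f` at `z`. -/
def HasW (f : ℂ → ℂ) (a b z : ℂ) : Prop :=
  HasFDerivAt f ((a • (ContinuousLinearMap.id ℝ ℂ)) + b • (conjCLE : ℂ →L[ℝ] ℂ)) z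

theorem HasW.hasFDerivAt' {f : ℂ → ℂ} {a b z : ℂ} {L : ℂ →L[ℝ] ℂ} (h : HasFDerivAt f L z)
    (hL : ∀ w, L w = a * w + b * (starRingEnd ℂ) w) : HasW f a b z := by
  unfold HasW
  convert h using 1
  ext w
  simp [hL]

theorem HasW.mul {f g : ℂ → ℂ} {a b c d z : ℂ} (hf : HasW f a b z) (hg : HasW g c d z) :
    HasW (fun w => f w * g w) (a * g z + f z * c) (b * g z + f z * d) z := by
  refine HasW.hasFDerivAt' (HasFDerivAt.mul hf hg) ?_
  intro w
  simp
  ring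

theorem HasW.sub {f g : ℂ → ℂ} {a b c d z : ℂ} (hf : HasW f a b z) (hg : HasW g c d z) :
    HasW (fun w => f w - g w) (a - c) (b - d) z := by
  refine HasW.hasFDerivAt' (HasFDerivAt.sub hf hg) ?_
  intro w
  simp
  ring

theorem HasW.conj {f : ℂ → ℂ} {a b z : ℂ} (hf : HasW f a b z) :
    HasW (fun w => (starRingEnd ℂ) (f w)) ((starRingEnd ℂ) b) ((starRingEnd ℂ) a) z := by
  refine HasW.hasFDerivAt' ((conjCLE : ℂ →L[ℝ] ℂ).hasFDerivAt.comp z hf) ?_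
  intro w
  simp
  ring

theorem HasW.of_hasDerivAt {f : ℂ → ℂ} {a z : ℂ} (hf : HasDerivAt f a z) : HasW f a 0 z := by
  refine HasW.hasFDerivAt' (hf.hasFDerivAt.restrictScalars ℝ) ?_
  intro w
  simp [mul_comm]

theorem HasW.congr_of_eventuallyEq {f g : ℂ → ℂ} {a b z : ℂ} (hf : HasW f a b z)
    (h : g =ᶠ[nhds z] f) : HasW g a b z :=
  HasFDerivAt.congr_of_eventuallyEq hf h

theorem HasW.const (c z : ℂ) : HasW (fun _ => c) 0 0 z :=
  HasW.of_hasDerivAt (hasDerivAt_const z c)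

theorem HasW.real_comp {f : ℂ → ℂ} {a b z : ℂ} {t : ℝ → ℝ} {t' : ℝ} (hf : HasW f a b z)
    (hab : a = (starRingEnd ℂ) b) (ht : HasDerivAt t t' (f z).re) :
    HasW (fun w => ((t (f w).re : ℝ) : ℂ)) (t' * a) (t' * b) z := by
  have h1 : HasFDerivAt (fun w => (f w).re) _ z := (reCLM.hasFDerivAt).comp z hf
  refine HasW.hasFDerivAt' ((ofRealCLM.hasFDerivAt).comp z (ht.hasFDerivAt.comp z h1)) ?_
  intro w
  apply Complex.ext
  · simp [hab]; ring
  · simp [hab]; ring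

theorem HasW.unique {f : ℂ → ℂ} {a b z : ℂ} (hf : HasW f a b z) :
    b = (fderiv ℝ f z 1 + I * fderiv ℝ f z I) / 2 := by
  rw [HasFDerivAt.fderiv hf]
  simp
  linear_combination (b - a) / 2 * I_mul_I

theorem HasW.exists {f : ℂ → ℂ} {z : ℂ} (hf : DifferentiableAt ℝ f z) : ∃ a b, HasW f a b z := by
  refine ⟨(fderiv ℝ f z 1 - I * fderiv ℝ f z I) / 2, (fderiv ℝ f z 1 + I * fderiv ℝ f z I) / 2,
    HasW.hasFDerivAt' hf.hasFDerivAt ?_⟩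
  intro w
  have : w = (w.re) • (1:ℂ) + w.im • I := by simp
  conv_lhs => rw [this, map_add, map_smul, map_smul]
  have h2 : (starRingEnd ℂ) w = w.re - w.im * I := by
    apply Complex.ext <;> simp
  conv_rhs => rw [h2]
  have h3 : w = w.re + w.im * I := by simp
  conv_rhs => enter [1,2]; rw [h3]
  simp only [real_smul]
  linear_combination (w.im * fderiv ℝ f z I) * I_mul_I

open MeasureTheory in
theorem integral_fderiv_zero {f : ℂ → ℂ} (hf : ContDiff ℝ 1 f) (hc : HasCompactSupport f) (v : ℂ) :
    ∫ z, fderiv ℝ f z v = 0 := by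
  have hi : Integrable (fun z => fderiv ℝ f z v) :=
    ((hf.continuous_fderiv one_ne_zero).clm_apply continuous_const).integrable_of_hasCompactSupport
      (hc.fderiv_apply ℝ v)
  have h := integral_smul_fderiv_eq_neg_fderiv_smul_of_integrable (𝕜 := ℝ) (μ := (volume : Measure ℂ))
    (f := fun _ => (1:ℝ)) (g := f) (v := v) (by simp) (by simpa using hi)
    (by simpa using hf.continuous.integrable_of_hasCompactSupport hc) (by fun_prop)
    (by intro x _; exact (hf.differentiable one_ne_zero) x)
  simpa using h

open MeasureTheory in
theorem integral_dbar_zero {f : ℂ → ℂ} {a b : ℂ → ℂ} (hf : ContDiff ℝ 1 f)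
    (hc : HasCompactSupport f) (hw : ∀ z, HasW f (a z) (b z) z) :
    Continuous b ∧ HasCompactSupport b ∧ Integrable b ∧ ∫ z, b z = 0 := by
  have hb : b = fun z => (fderiv ℝ f z 1 + I * fderiv ℝ f z I) / 2 := by
    ext z; exact (hw z).unique
  have hcont : ∀ v, Continuous (fun z => fderiv ℝ f z v) := fun v =>
    (hf.continuous_fderiv one_ne_zero).clm_apply continuous_const
  have hi : ∀ v, Integrable (fun z => fderiv ℝ f z v) := fun v =>
    (hcont v).integrable_of_hasCompactSupport (hc.fderiv_apply ℝ v)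
  have c1 : Continuous b := by
    rw [hb]; have := hcont 1; have := hcont I; fun_prop
  have c2 : HasCompactSupport b := by
    rw [hb]
    refine (hc.fderiv ℝ).mono ?_
    intro z hz h0
    apply hz
    simp [h0]
  refine ⟨c1, c2, c1.integrable_of_hasCompactSupport c2, ?_⟩
  rw [hb, integral_div, integral_add (hi _) ((hi _).const_mul _), integral_const_mul,
    integral_fderiv_zero hf hc, integral_fderiv_zero hf hc]
  simp

/-- the cutoff -/
noncomputable def tau (δ t : ℝ) : ℝ := (1 - δ / max t δ) ^ 2
noncomputable def tau' (δ t : ℝ) : ℝ := 2 * (1 - δ / max t δ) * (δ / (max t δ) ^ 2)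

theorem tau_zero {δ t : ℝ} (hδ : 0 < δ) (h : t ≤ δ) : tau δ t = 0 := by
  simp [tau, max_eq_right h, hδ.ne']

theorem tau'_zero {δ t : ℝ} (hδ : 0 < δ) (h : t ≤ δ) : tau' δ t = 0 := by
  simp [tau', max_eq_right h, hδ.ne']

theorem tau'_cont {δ : ℝ} (hδ : 0 < δ) : Continuous (tau' δ) := by
  unfold tau'
  have : ∀ t, max t δ ≠ 0 := fun t => (lt_of_lt_of_le hδ (le_max_right _ _)).ne'
  fun_prop (disch := simp [this])

theorem tau_cont {δ : ℝ} (hδ : 0 < δ) : Continuous (tau δ) := by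
  unfold tau
  have : ∀ t, max t δ ≠ 0 := fun t => (lt_of_lt_of_le hδ (le_max_right _ _)).ne'
  fun_prop (disch := simp [this])

theorem tau_hasDerivAt {δ : ℝ} (hδ : 0 < δ) (t : ℝ) : HasDerivAt (tau δ) (tau' δ t) t := by
  have key : ∀ t, t ≠ δ → HasDerivAt (tau δ) (tau' δ t) t := by
    intro t ht
    rcases lt_or_gt_of_ne ht with h | h
    · rw [tau'_zero hδ h.le]
      refine (hasDerivAt_const t (0:ℝ)).congr_of_eventuallyEq ?_
      filter_upwards [Iio_mem_nhds h] with s hs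
      exact tau_zero hδ (le_of_lt hs)
    · have ht0 : t ≠ 0 := (hδ.trans h).ne'
      have h1 : HasDerivAt (fun t : ℝ => (1 - δ / t) ^ 2) (tau' δ t) t := by
        have := (((hasDerivAt_inv ht0).const_mul δ).const_sub 1).pow 2
        simp only [tau', max_eq_left h.le]
        refine (this.congr_deriv ?_).congr_of_eventuallyEq
          (Eventually.of_forall fun s => by simp [div_eq_mul_inv])
        simp only [Nat.cast_ofNat, Nat.add_one_sub_one, pow_one, div_eq_mul_inv]
        ring
      refine h1.congr_of_eventuallyEq ?_
      filter_upwards [Ioi_mem_nhds h] with s hs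
      simp [tau, max_eq_left (le_of_lt (mem_Ioi.1 hs))]
  by_cases ht : t = δ
  · subst ht
    exact hasDerivAt_of_hasDerivAt_of_ne key (tau_cont hδ).continuousAt (tau'_cont hδ).continuousAt
  · exact key t ht

theorem tau_contDiff {δ : ℝ} (hδ : 0 < δ) : ContDiff ℝ 1 (tau δ) := by
  rw [contDiff_one_iff_deriv]
  refine ⟨fun t => (tau_hasDerivAt hδ t).differentiableAt, ?_⟩
  have : deriv (tau δ) = tau' δ := by ext t; exact (tau_hasDerivAt hδ t).deriv
  rw [this]; exact tau'_cont hδ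

theorem tau_bounds {δ t : ℝ} (hδ : 0 < δ) (ht : 0 ≤ t) :
    0 ≤ tau δ t ∧ tau δ t ≤ 1 ∧ 0 ≤ tau' δ t ∧ tau' δ t * t ≤ 2 := by
  have hm : 0 < max t δ := lt_of_lt_of_le hδ (le_max_right _ _)
  have h1 : δ / max t δ ≤ 1 := by rw [div_le_one hm]; exact le_max_right _ _
  have h0 : 0 ≤ δ / max t δ := by positivity
  refine ⟨by unfold tau; positivity, by unfold tau; nlinarith, ?_, ?_⟩
  · unfold tau'
    have : 0 ≤ 1 - δ / max t δ := by linarith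
    positivity
  · have h2 : t / max t δ ≤ 1 := by rw [div_le_one hm]; exact le_max_left _ _
    have h3 : 0 ≤ t / max t δ := by positivity
    have : tau' δ t * t = 2 * (1 - δ / max t δ) * ((δ / max t δ) * (t / max t δ)) := by
      unfold tau'; field_simp
    rw [this]
    have h4 : (δ / max t δ) * (t / max t δ) ≤ 1 := by nlinarith
    have h5 : 0 ≤ (δ / max t δ) * (t / max t δ) := by positivity
    nlinarith

theorem tau_tendsto {t : ℝ} (ht : 0 < t) : Tendsto (fun δ => tau δ t) (𝓝[>] 0) (nhds 1) := by
  have h : Tendsto (fun δ : ℝ => (1 - δ / t) ^ 2) (𝓝[>] 0) (nhds 1) := by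
    have : Continuous (fun δ : ℝ => (1 - δ / t) ^ 2) := by fun_prop
    have h2 := this.tendsto 0
    simp at h2
    exact h2.mono_left nhdsWithin_le_nhds
  refine h.congr' ?_
  filter_upwards [mem_nhdsWithin_of_mem_nhds (Iio_mem_nhds ht)] with δ hδ
  simp [tau, max_eq_left (le_of_lt (mem_Iio.1 hδ))]

theorem tau'_tendsto {t : ℝ} (ht : 0 ≤ t) : Tendsto (fun δ => tau' δ t) (𝓝[>] 0) (nhds 0) := by
  rcases ht.eq_or_lt with rfl | ht
  · refine tendsto_const_nhds.congr' ?_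
    filter_upwards [self_mem_nhdsWithin] with δ hδ
    exact (tau'_zero hδ (le_of_lt hδ)).symm
  have h : Tendsto (fun δ : ℝ => 2 * (1 - δ / t) * (δ / t ^ 2)) (𝓝[>] 0) (nhds 0) := by
    have : Continuous (fun δ : ℝ => 2 * (1 - δ / t) * (δ / t ^ 2)) := by fun_prop
    have h2 := this.tendsto 0
    simp at h2
    exact h2.mono_left nhdsWithin_le_nhds
  refine h.congr' ?_
  filter_upwards [mem_nhdsWithin_of_mem_nhds (Iio_mem_nhds ht)] with δ hδ
  simp [tau', max_eq_left (le_of_lt (mem_Iio.1 hδ))]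

open MeasureTheory in
theorem glue {D : Set ℂ} (hD : IsOpen D) {G p g A α β φ φ1 φ2 : ℂ → ℂ}
    (hG : ContinuousOn G D)
    (hGW : ∀ z ∈ D, G z ≠ 0 → HasW G (p z) (g z) z ∧ ContDiffAt ℝ 1 G z)
    (hAW : ∀ z ∈ D, G z ≠ 0 → HasW A (α z) (β z) z ∧ ContDiffAt ℝ 1 A z)
    (hφ : ContDiff ℝ 1 φ) (hφc : HasCompactSupport φ) (hφD : tsupport φ ⊆ D)
    (hφW : ∀ z, HasW φ (φ1 z) (φ2 z) z) {δ : ℝ} (hδ : 0 < δ) :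
    let b : ℂ → ℂ := fun z => φ2 z * (tau δ (normSq (G z))) * A z
      + φ z * (tau' δ (normSq (G z))) * (g z * (starRingEnd ℂ) (G z)
        + G z * (starRingEnd ℂ) (p z)) * A z
      + φ z * (tau δ (normSq (G z))) * β z
    Integrable b ∧ ∫ z, b z = 0 := by
  intro b
  set X : ℂ → ℂ := fun z => φ z * ((tau δ (normSq (G z)) : ℝ) : ℂ) * A z with hX
  have hbad : ∀ z, ¬ (z ∈ D ∧ G z ≠ 0) → X =ᶠ[nhds z] fun _ => 0 := by
    intro z hz
    by_cases hzD : z ∈ D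
    · have hG0 : G z = 0 := by by_contra h; exact hz ⟨hzD, h⟩
      have hc : ContinuousAt (fun w => normSq (G w)) z :=
        (continuous_normSq.continuousAt).comp (hG.continuousAt (hD.mem_nhds hzD))
      have : ∀ᶠ w in nhds z, normSq (G w) < δ := by
        apply hc.eventually_lt continuousAt_const
        simpa [hG0] using hδ
      filter_upwards [this] with w hw
      simp [hX, tau_zero hδ hw.le]
    · have : z ∉ tsupport φ := fun h => hzD (hφD h)
      filter_upwards [(notMem_tsupport_iff_eventuallyEq).1 this] with w hw
      simp [hX, hw]
  have hφ2 : ∀ z, z ∉ D → φ z = 0 ∧ φ2 z = 0 := by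
    intro z hzD
    have : z ∉ tsupport φ := fun h => hzD (hφD h)
    have h1 := (notMem_tsupport_iff_eventuallyEq).1 this
    refine ⟨h1.self_of_nhds, ?_⟩
    have h2 := (HasW.const 0 z).congr_of_eventuallyEq h1
    rw [(hφW z).unique, ← h2.unique]
  have hW : ∀ z, ∃ a, HasW X a (b z) z := by
    intro z
    by_cases hz : z ∈ D ∧ G z ≠ 0
    · obtain ⟨h1, -⟩ := hGW z hz.1 hz.2
      obtain ⟨h2, -⟩ := hAW z hz.1 hz.2
      have hN : HasW (fun w => G w * (starRingEnd ℂ) (G w)) _ _ z := h1.mul h1.conj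
      have e : ∀ w, (G w * (starRingEnd ℂ) (G w)).re = normSq (G w) := by
        intro w; rw [mul_conj]; simp
      have hT := hN.real_comp (t := tau δ) (t' := tau' δ (normSq (G z))) (by
        simp; ring) (by rw [e]; exact tau_hasDerivAt hδ _)
      simp only [e] at hT
      have := ((hφW z).mul hT).mul h2
      have key : ∀ a c, HasW X a c z → c = b z → ∃ a, HasW X a (b z) z :=
        fun a c h e => ⟨a, e ▸ h⟩
      exact key _ _ this (by simp only [b]; ring)
    · refine ⟨0, ?_⟩
      have h0 : b z = 0 := by
        by_cases hzD : z ∈ D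
        · have hG0 : G z = 0 := by by_contra h; exact hz ⟨hzD, h⟩
          simp [b, hG0, tau_zero hδ hδ.le, tau'_zero hδ hδ.le]
        · obtain ⟨h1, h2⟩ := hφ2 z hzD
          simp [b, h1, h2]
      rw [h0]
      exact (HasW.const 0 z).congr_of_eventuallyEq (hbad z hz)
  have hXc : ContDiff ℝ 1 X := by
    rw [contDiff_iff_contDiffAt]
    intro z
    by_cases hz : z ∈ D ∧ G z ≠ 0
    · obtain ⟨-, h1⟩ := hGW z hz.1 hz.2
      obtain ⟨-, h2⟩ := hAW z hz.1 hz.2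
      have hN : ContDiffAt ℝ 1 (fun w => normSq (G w)) z := by
        have : (fun w => normSq (G w)) = fun w => ‖G w‖ ^ 2 := by
          ext w; exact normSq_eq_norm_sq _
        rw [this]
        exact h1.norm_sq ℝ
      have hT : ContDiffAt ℝ 1 (fun w => tau δ (normSq (G w))) z :=
        (tau_contDiff hδ).contDiffAt.comp z hN
      have hT2 : ContDiffAt ℝ 1 (fun w => ((tau δ (normSq (G w)) : ℝ) : ℂ)) z :=
        (ofRealCLM.contDiff.contDiffAt).comp z hT
      exact (hφ.contDiffAt.mul hT2).mul h2
    · exact contDiffAt_const.congr_of_eventuallyEq (hbad z hz)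
  have hXs : HasCompactSupport X := by
    refine hφc.mono ?_
    intro z hz h0
    apply hz
    simp [hX, h0]
  choose a ha using hW
  obtain ⟨-, -, h3, h4⟩ := integral_dbar_zero hXc hXs ha
  exact ⟨h3, h4⟩

theorem energy_alg {ψ τ τ' N : ℝ} {ψ2 G g m s : ℂ} (hτ : 0 ≤ τ) (hτ1 : τ ≤ 1) (hτ' : 0 ≤ τ')
    (hN : N = normSq G) (hτN : τ' * N ≤ 2) {C : ℝ}
    (hC : (2 * ‖ψ2‖ * ‖G‖ + |ψ| * (‖g‖ + ‖m‖)) ^ 2 ≤ C) :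
    ψ ^ 2 * τ * ‖s‖ ^ 2 ≤ 3 * C - 2 * ((ψ2 * ψ + ψ * ψ2) * τ * ((starRingEnd ℂ) G * s)
      + (ψ * ψ) * τ' * (g * (starRingEnd ℂ) G
        + G * (starRingEnd ℂ) (m - s)) * ((starRingEnd ℂ) G * s)
      + (ψ * ψ) * τ * ((starRingEnd ℂ) (m - s) * s)).re := by
  set H := 2 * ‖ψ2‖ * ‖G‖ + |ψ| * (‖g‖ + ‖m‖) with hH
  set a := τ + τ' * N with ha
  have hN0 : 0 ≤ N := by rw [hN]; exact normSq_nonneg _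
  have hNG : N = ‖G‖ ^ 2 := by rw [hN, normSq_eq_norm_sq]
  have hτN0 : 0 ≤ τ' * N := by positivity
  set b := ((ψ2 * ψ + ψ * ψ2) * τ * ((starRingEnd ℂ) G * s)
      + (ψ * ψ) * τ' * (g * (starRingEnd ℂ) G
        + G * (starRingEnd ℂ) (m - s)) * ((starRingEnd ℂ) G * s)
      + (ψ * ψ) * τ * ((starRingEnd ℂ) (m - s) * s)) with hb
  have hGG : G * (starRingEnd ℂ) G = (N : ℂ) := by rw [mul_conj, hN]
  have hss : s * (starRingEnd ℂ) s = ((‖s‖ ^ 2 : ℝ) : ℂ) := by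
    rw [mul_conj, normSq_eq_norm_sq]
  have e : b + ((ψ ^ 2 * a * ‖s‖ ^ 2 : ℝ) : ℂ) = 2 * ψ * ψ2 * τ * ((starRingEnd ℂ) G) * s
      + ψ ^ 2 * τ' * g * ((starRingEnd ℂ) G) ^ 2 * s + ψ ^ 2 * a * (starRingEnd ℂ) m * s := by
    have : ((ψ ^ 2 * a * ‖s‖ ^ 2 : ℝ) : ℂ) = ψ ^ 2 * a * (s * (starRingEnd ℂ) s) := by
      rw [hss]; push_cast; ring
    rw [this, hb, ha, map_sub]
    push_cast
    rw [← hGG]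
    ring
  have hn : ‖b + ((ψ ^ 2 * a * ‖s‖ ^ 2 : ℝ) : ℂ)‖ ≤ a * (|ψ| * ‖s‖) * H := by
    rw [e]
    refine (norm_add₃_le).trans ?_
    simp only [norm_mul, norm_pow, RCLike.norm_conj, norm_real, Real.norm_eq_abs, norm_ofNat,
      abs_of_nonneg hτ, abs_of_nonneg hτ']
    rw [abs_of_nonneg (add_nonneg hτ hτN0 : 0 ≤ a)]
    have h1 : 2 * |ψ| * ‖ψ2‖ * τ * ‖G‖ * ‖s‖ ≤ 2 * |ψ| * ‖ψ2‖ * a * ‖G‖ * ‖s‖ := by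
      gcongr; linarith
    have h2 : |ψ| ^ 2 * τ' * ‖g‖ * ‖G‖ ^ 2 * ‖s‖ ≤ |ψ| ^ 2 * ‖g‖ * a * ‖s‖ := by
      have : |ψ| ^ 2 * τ' * ‖g‖ * ‖G‖ ^ 2 * ‖s‖ = |ψ| ^ 2 * ‖g‖ * (τ' * N) * ‖s‖ := by
        rw [hNG]; ring
      rw [this]
      gcongr; linarith
    calc _ ≤ 2 * |ψ| * ‖ψ2‖ * a * ‖G‖ * ‖s‖ + |ψ| ^ 2 * ‖g‖ * a * ‖s‖
          + |ψ| ^ 2 * a * ‖m‖ * ‖s‖ := by linarith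
      _ = _ := by rw [hH]; ring
  have hre : -b.re ≥ ψ ^ 2 * a * ‖s‖ ^ 2 - a * (|ψ| * ‖s‖) * H := by
    have := (abs_le.1 ((abs_re_le_norm _).trans hn)).1
    have h2 : (b + ((ψ ^ 2 * a * ‖s‖ ^ 2 : ℝ) : ℂ)).re = b.re + ψ ^ 2 * a * ‖s‖ ^ 2 := by
      rw [add_re, ofReal_re]
    have := (abs_le.1 ((abs_re_le_norm _).trans hn)).2
    rw [h2] at this
    linarith
  have ha0 : 0 ≤ a := add_nonneg hτ hτN0
  have ha3 : a ≤ 3 := by linarith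
  have hsq : |ψ| ^ 2 = ψ ^ 2 := sq_abs ψ
  have h5 : 2 * (a * (|ψ| * ‖s‖) * H) ≤ a * (ψ ^ 2 * ‖s‖ ^ 2) + a * H ^ 2 := by
    have h51 : 0 ≤ a * (|ψ| * ‖s‖ - H) ^ 2 := by positivity
    have h52 : a * (|ψ| * ‖s‖ - H) ^ 2 = a * (ψ ^ 2 * ‖s‖ ^ 2) + a * H ^ 2
        - 2 * (a * (|ψ| * ‖s‖) * H) := by
      rw [← hsq]; ring
    linarith
  have h6 : a * H ^ 2 ≤ 3 * C := by
    have : 0 ≤ H ^ 2 := by positivity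
    nlinarith
  have h7 : ψ ^ 2 * τ * ‖s‖ ^ 2 ≤ ψ ^ 2 * a * ‖s‖ ^ 2 := by
    gcongr; linarith
  nlinarith

open MeasureTheory in
theorem energy {r : ℝ} {n : ℕ} {Ω : Set ℂ} (hΩ : IsOpen Ω) {F : ℂ → ℂ} (hFm : Measurable F)
    (hF : ContinuousOn F (ball 0 r)) (hFd : DifferentiableOn ℂ F Ω)
    (hFE : ∀ z ∈ ball 0 r, z ∉ Ω → F z = (starRingEnd ℂ) z * z ^ n)
    {ρ : ℝ} (hρ : 0 < ρ) (hρr : ρ < r) :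
    Integrable (fun z => (ball 0 ρ ∩ {z | (starRingEnd ℂ) z * z ^ n - F z ≠ 0}).indicator
      (fun z => ‖deriv F z‖ ^ 2) z) := by
  set G : ℂ → ℂ := fun z => (starRingEnd ℂ) z * z ^ n - F z with hGdef
  set m : ℂ → ℂ := fun z => (starRingEnd ℂ) z * (n * z ^ (n-1)) with hm
  set s : ℂ → ℂ := deriv F with hs
  have hGm : Measurable G := by
    have : Measurable (fun z : ℂ => (starRingEnd ℂ) z * z ^ n) := by
      apply Continuous.measurable; fun_prop
    exact this.sub hFm
  have hsm : Measurable s := measurable_deriv F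
  have hGc : ContinuousOn G (ball 0 r) := by
    apply ContinuousOn.sub _ hF
    apply Continuous.continuousOn; fun_prop
  have hmem : ∀ z ∈ ball (0:ℂ) r, G z ≠ 0 → z ∈ Ω := by
    intro z hz hG
    by_contra h
    exact hG (by simp [hGdef, hFE z hz h])
  have hGW : ∀ z ∈ ball (0:ℂ) r, G z ≠ 0 →
      HasW G (m z - s z) (z ^ n) z ∧ ContDiffAt ℝ 1 G z := by
    intro z hz hG
    have hzΩ := hmem z hz hG
    have hd : HasDerivAt F (s z) z := (hFd.differentiableAt (hΩ.mem_nhds hzΩ)).hasDerivAt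
    constructor
    · have h1 : HasW (fun z : ℂ => (starRingEnd ℂ) z) _ _ z :=
        (HasW.of_hasDerivAt (hasDerivAt_id z)).conj
      have h2 := (h1.mul (HasW.of_hasDerivAt (hasDerivAt_pow n z))).sub (HasW.of_hasDerivAt hd)
      simpa [hm, hGdef] using h2
    · have h3 : ContDiffAt ℝ 1 F z :=
        ((hFd.analyticAt (hΩ.mem_nhds hzΩ)).contDiffAt (n := 1)).restrict_scalars ℝ
      have h4 : ContDiff ℝ 1 (fun z : ℂ => (starRingEnd ℂ) z * z ^ n) := by
        have : ContDiff ℝ 1 (fun z : ℂ => (starRingEnd ℂ) z) := conjCLE.contDiff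
        fun_prop
      exact h4.contDiffAt.sub h3
  have hAW : ∀ z ∈ ball (0:ℂ) r, G z ≠ 0 →
      HasW (fun z => (starRingEnd ℂ) (G z) * s z)
        ((starRingEnd ℂ) (z ^ n) * s z + (starRingEnd ℂ) (G z) * deriv s z)
        ((starRingEnd ℂ) (m z - s z) * s z) z ∧
      ContDiffAt ℝ 1 (fun z => (starRingEnd ℂ) (G z) * s z) z := by
    intro z hz hG
    have hzΩ := hmem z hz hG
    have hsd : DifferentiableOn ℂ s Ω := hFd.deriv hΩ
    have hd : HasDerivAt s (deriv s z) z :=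
      (hsd.differentiableAt (hΩ.mem_nhds hzΩ)).hasDerivAt
    obtain ⟨h1, h2⟩ := hGW z hz hG
    constructor
    · simpa using h1.conj.mul (HasW.of_hasDerivAt hd)
    · have h3 : ContDiffAt ℝ 1 s z :=
        ((hsd.analyticAt (hΩ.mem_nhds hzΩ)).contDiffAt (n := 1)).restrict_scalars ℝ
      exact (conjCLE.contDiff.contDiffAt.comp z h2).mul h3
  -- bump
  let B : ContDiffBump (0:ℂ) := ⟨ρ, (ρ + r) / 2, hρ, by linarith⟩
  have hBc : ContDiff ℝ 1 (fun z => ((B z : ℝ) : ℂ)) := ofRealCLM.contDiff.comp B.contDiff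
  have hBs : HasCompactSupport (fun z => ((B z : ℝ) : ℂ)) :=
    B.hasCompactSupport.comp_left (g := fun x : ℝ => (x : ℂ)) (by simp)
  have hBex : ∀ z, ∃ a b, HasW (fun z => ((B z : ℝ) : ℂ)) a b z := fun z =>
    HasW.exists (hBc.differentiable one_ne_zero z)
  choose ψ1 ψ2 hψ using hBex
  obtain ⟨hψ2c, hψ2s, -, -⟩ := integral_dbar_zero hBc hBs hψ
  have hK : tsupport (fun z => ((B z : ℝ) : ℂ)) ⊆ closedBall 0 ((ρ + r) / 2) := by
    have : tsupport (fun z => ((B z : ℝ) : ℂ)) ⊆ tsupport (B : ℂ → ℝ) :=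
      closure_mono (by intro z hz h0; apply hz; simp [h0])
    rw [B.tsupport_eq] at this
    exact this
  have hKr : closedBall (0:ℂ) ((ρ + r) / 2) ⊆ ball 0 r := closedBall_subset_ball (by linarith)
  set K := closedBall (0:ℂ) ((ρ + r) / 2) with hKdef
  have hKc : IsCompact K := isCompact_closedBall _ _
  obtain ⟨C, hC⟩ : ∃ C, ∀ z ∈ K,
      (2 * ‖ψ2 z‖ * ‖G z‖ + |B z| * (‖z ^ n‖ + ‖m z‖)) ^ 2 ≤ C := by
    have hc : ContinuousOn (fun z => (2 * ‖ψ2 z‖ * ‖G z‖ + |B z| * (‖z ^ n‖ + ‖m z‖)) ^ 2) K := by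
      have h1 := hGc.mono hKr
      have h2 : Continuous m := by simp only [hm]; fun_prop
      have h3 : Continuous (B : ℂ → ℝ) := B.continuous
      fun_prop
    obtain ⟨C, hC⟩ := (hKc.image_of_continuousOn hc).bddAbove
    exact ⟨C, fun z hz => hC (mem_image_of_mem _ hz)⟩
  have hC0 : 0 ≤ C := by
    refine le_trans ?_ (hC 0 (by simp [hKdef]; linarith))
    positivity
  -- the bound for each δ
  have key : ∀ δ > 0, ∫⁻ z, ENNReal.ofReal ((B z) ^ 2 * tau δ (normSq (G z)) * ‖s z‖ ^ 2)
      ≤ ENNReal.ofReal (3 * C * (volume K).toReal) := by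
    intro δ hδ
    obtain ⟨h1, h2⟩ := glue isOpen_ball hGc hGW hAW (hBc.mul hBc) (hBs.mul_right)
      ((closure_mono (by intro z hz h0; apply hz; simp [h0])).trans (hK.trans hKr))
      (fun z => (hψ z).mul (hψ z)) hδ
    set b : ℂ → ℂ := _
    change Integrable b volume at h1
    change ∫ z, b z = 0 at h2
    have hKi : Integrable (K.indicator (fun _ => 3 * C)) :=
      (integrable_indicator_iff measurableSet_closedBall).2
        (integrableOn_const hKc.measure_lt_top.ne)
    have hint : Integrable (fun z => K.indicator (fun _ => 3 * C) z - 2 * (b z).re) :=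
      hKi.sub (h1.re.const_mul 2)
    have hpt : ∀ z, (B z) ^ 2 * tau δ (normSq (G z)) * ‖s z‖ ^ 2 ≤
        K.indicator (fun _ => 3 * C) z - 2 * (b z).re := by
      intro z
      by_cases hz : z ∈ K
      · rw [indicator_of_mem hz]
        obtain ⟨t1, t2, t3, t4⟩ := tau_bounds hδ (normSq_nonneg (G z))
        exact energy_alg t1 t2 t3 rfl t4 (hC z hz)
      · rw [indicator_of_notMem hz]
        have hzt : z ∉ tsupport (fun z => ((B z : ℝ) : ℂ)) := fun h => hz (hK h)
        have h0 : B z = 0 := by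
          have := image_eq_zero_of_notMem_tsupport hzt
          exact_mod_cast this
        simp [b, h0]
    calc _ ≤ ∫⁻ z, ENNReal.ofReal (K.indicator (fun _ => 3 * C) z - 2 * (b z).re) :=
          lintegral_mono fun z => ENNReal.ofReal_le_ofReal (hpt z)
      _ = ENNReal.ofReal (∫ z, (K.indicator (fun _ => 3 * C) z - 2 * (b z).re)) := by
          rw [ofReal_integral_eq_lintegral_ofReal hint]
          refine Eventually.of_forall fun z => le_trans ?_ (hpt z)
          have := (tau_bounds hδ (normSq_nonneg (G z))).1
          simp only [Pi.zero_apply]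
          positivity
      _ = _ := by
          congr 1
          have h3 : ∫ z, (b z).re = 0 := by
            have := integral_re h1
            simp only [RCLike.re_eq_complex_re] at this
            rw [this, h2]; simp
          change ∫ z, (K.indicator (fun _ => 3 * C) z - 2 * RCLike.re (b z)) = _
          rw [integral_sub hKi (h1.re.const_mul 2), integral_indicator measurableSet_closedBall]
          have h4 : ∫ z, 2 * RCLike.re (b z) = 0 := by
            rw [integral_const_mul]; simp [h3]
          rw [h4]
          rw [setIntegral_const]
          simp only [Measure.real, smul_eq_mul, sub_zero]
          ring
  -- Fatou
  have hmeas : MeasurableSet (ball (0:ℂ) ρ ∩ {z | G z ≠ 0}) :=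
    measurableSet_ball.inter (hGm (measurableSet_singleton 0).compl)
  refine ⟨((hsm.norm.pow_const 2).indicator hmeas).aestronglyMeasurable, ?_⟩
  rw [hasFiniteIntegral_iff_ofReal (Eventually.of_forall fun z =>
    indicator_nonneg (fun _ _ => by positivity) z)]
  set d : ℕ → ℝ := fun k => 1 / ((k:ℝ) + 1) with hd
  have hd0 : ∀ k, 0 < d k := fun k => by simp only [hd]; positivity
  have hdt : Tendsto d atTop (𝓝[>] 0) :=
    tendsto_nhdsWithin_iff.2 ⟨tendsto_one_div_add_atTop_nhds_zero_nat,
      Eventually.of_forall hd0⟩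
  have hle : ∀ z, ENNReal.ofReal ((ball 0 ρ ∩ {z | G z ≠ 0}).indicator (fun z => ‖s z‖ ^ 2) z) ≤
      liminf (fun k => ENNReal.ofReal ((B z) ^ 2 * tau (d k) (normSq (G z)) * ‖s z‖ ^ 2)) atTop := by
    intro z
    by_cases hz : z ∈ ball (0:ℂ) ρ ∩ {z | G z ≠ 0}
    · have hB : B z = 1 := B.one_of_mem_closedBall (ball_subset_closedBall hz.1)
      have ht : Tendsto (fun k => ENNReal.ofReal ((B z) ^ 2 * tau (d k) (normSq (G z)) * ‖s z‖ ^ 2))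
          atTop (nhds (ENNReal.ofReal (‖s z‖ ^ 2))) := by
        apply ENNReal.tendsto_ofReal
        have := ((tau_tendsto (normSq_pos.2 hz.2)).comp hdt).mul_const (‖s z‖ ^ 2)
        simpa [hB] using this
      rw [ht.liminf_eq, indicator_of_mem hz]
    · rw [indicator_of_notMem hz]; simp
  have hcont : ∀ k, Measurable (fun z =>
      ENNReal.ofReal ((B z) ^ 2 * tau (d k) (normSq (G z)) * ‖s z‖ ^ 2)) := by
    intro k
    have h1 : Measurable (B : ℂ → ℝ) := B.continuous.measurable
    have h2 : Measurable (fun z => tau (d k) (normSq (G z))) :=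
      (tau_cont (hd0 k)).measurable.comp (continuous_normSq.measurable.comp hGm)
    exact (((h1.pow_const 2).mul h2).mul (hsm.norm.pow_const 2)).ennreal_ofReal
  calc _ ≤ ∫⁻ z, liminf (fun k => ENNReal.ofReal
            ((B z) ^ 2 * tau (d k) (normSq (G z)) * ‖s z‖ ^ 2)) atTop := lintegral_mono hle
    _ ≤ liminf (fun k => ∫⁻ z, ENNReal.ofReal
            ((B z) ^ 2 * tau (d k) (normSq (G z)) * ‖s z‖ ^ 2)) atTop := lintegral_liminf_le hcont
    _ ≤ ENNReal.ofReal (3 * C * (volume K).toReal) := by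
        refine liminf_le_of_le (by isBoundedDefault) ?_
        intro b hb
        obtain ⟨k, hk⟩ := hb.exists
        exact hk.trans (key _ (hd0 k))
    _ < ⊤ := ENNReal.ofReal_lt_top

open MeasureTheory in
theorem weak_identity {r : ℝ} (hr : 0 < r) {n : ℕ} {Ω : Set ℂ} (hΩ : IsOpen Ω) {F : ℂ → ℂ}
    (hFm : Measurable F)
    (hF : ContinuousOn F (ball 0 r)) (hFd : DifferentiableOn ℂ F Ω)
    (hFE : ∀ z ∈ ball 0 r, z ∉ Ω → F z = (starRingEnd ℂ) z * z ^ n)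
    {φ φ1 φ2 : ℂ → ℂ} (hφ : ContDiff ℝ 1 φ) (hφc : HasCompactSupport φ)
    (hφD : tsupport φ ⊆ ball 0 r) (hφW : ∀ z, HasW φ (φ1 z) (φ2 z) z) :
    Integrable (fun z => φ2 z * ((starRingEnd ℂ) z * z ^ n - F z)) ∧
    ∫ z, (φ2 z * ((starRingEnd ℂ) z * z ^ n - F z) +
      {z | (starRingEnd ℂ) z * z ^ n - F z ≠ 0}.indicator (fun z => φ z * z ^ n) z) = 0 := by
  obtain ⟨ρ, ⟨hρ, hρr⟩, hφρ⟩ := exists_pos_lt_subset_ball hr (isClosed_tsupport φ) hφD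
  have hen := energy hΩ hFm hF hFd hFE hρ hρr
  set G : ℂ → ℂ := fun z => (starRingEnd ℂ) z * z ^ n - F z with hGdef
  set m : ℂ → ℂ := fun z => (starRingEnd ℂ) z * (n * z ^ (n-1)) with hm
  set s : ℂ → ℂ := deriv F with hs
  have hGm : Measurable G := by
    have : Measurable (fun z : ℂ => (starRingEnd ℂ) z * z ^ n) := by
      apply Continuous.measurable; fun_prop
    exact this.sub hFm
  have hGc : ContinuousOn G (ball 0 r) := by
    apply ContinuousOn.sub _ hF
    apply Continuous.continuousOn; fun_prop
  have hmem : ∀ z ∈ ball (0:ℂ) r, G z ≠ 0 → z ∈ Ω := by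
    intro z hz hG
    by_contra h
    exact hG (by simp [hGdef, hFE z hz h])
  have hGW : ∀ z ∈ ball (0:ℂ) r, G z ≠ 0 →
      HasW G (m z - s z) (z ^ n) z ∧ ContDiffAt ℝ 1 G z := by
    intro z hz hG
    have hzΩ := hmem z hz hG
    have hd : HasDerivAt F (s z) z := (hFd.differentiableAt (hΩ.mem_nhds hzΩ)).hasDerivAt
    constructor
    · have h1 : HasW (fun z : ℂ => (starRingEnd ℂ) z) _ _ z :=
        (HasW.of_hasDerivAt (hasDerivAt_id z)).conj
      have h2 := (h1.mul (HasW.of_hasDerivAt (hasDerivAt_pow n z))).sub (HasW.of_hasDerivAt hd)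
      simpa [hm, hGdef] using h2
    · have h3 : ContDiffAt ℝ 1 F z :=
        ((hFd.analyticAt (hΩ.mem_nhds hzΩ)).contDiffAt (n := 1)).restrict_scalars ℝ
      have h4 : ContDiff ℝ 1 (fun z : ℂ => (starRingEnd ℂ) z * z ^ n) := by
        have : ContDiff ℝ 1 (fun z : ℂ => (starRingEnd ℂ) z) := conjCLE.contDiff
        fun_prop
      exact h4.contDiffAt.sub h3
  obtain ⟨hφ2c, hφ2s, -, -⟩ := integral_dbar_zero hφ hφc hφW
  have hφ0 : ∀ z, z ∉ ball (0:ℂ) ρ → φ z = 0 ∧ φ2 z = 0 := by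
    intro z hz
    have : z ∉ tsupport φ := fun h => hz (hφρ h)
    have h1 := (notMem_tsupport_iff_eventuallyEq).1 this
    refine ⟨h1.self_of_nhds, ?_⟩
    have h2 := (HasW.const 0 z).congr_of_eventuallyEq h1
    rw [(hφW z).unique, ← h2.unique]
  -- uniform bounds
  have hKr : closedBall (0:ℂ) ρ ⊆ ball 0 r := closedBall_subset_ball hρr
  have hKc : IsCompact (closedBall (0:ℂ) ρ) := isCompact_closedBall _ _
  obtain ⟨C, hC⟩ : ∃ C, ∀ z ∈ closedBall (0:ℂ) ρ, ‖φ2 z‖ * ‖G z‖ ≤ C ∧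
      ‖φ2 z‖ * ‖G z‖ + 3 * ‖φ z‖ * ‖z ^ n‖ + 2 * ‖φ z‖ * (‖m z‖ + 1) ≤ C ∧ 2 * ‖φ z‖ ≤ C := by
    have hφc' := hφ.continuous
    have h1 := hGc.mono hKr
    have h2 : Continuous m := by simp only [hm]; fun_prop
    have hc : ContinuousOn (fun z => ‖φ2 z‖ * ‖G z‖ + 3 * ‖φ z‖ * ‖z ^ n‖
        + 2 * ‖φ z‖ * (‖m z‖ + 1)) (closedBall (0:ℂ) ρ) := by
      fun_prop
    obtain ⟨C, hC⟩ := (hKc.image_of_continuousOn hc).bddAbove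
    refine ⟨C, fun z hz => ?_⟩
    have h3 := hC (mem_image_of_mem _ hz)
    have : 0 ≤ ‖φ2 z‖ * ‖G z‖ := by positivity
    have : 0 ≤ ‖φ z‖ * ‖z ^ n‖ := by positivity
    have : 0 ≤ ‖φ z‖ * ‖m z‖ := by positivity
    have : 0 ≤ ‖φ z‖ := by positivity
    refine ⟨?_, h3, ?_⟩ <;> nlinarith
  have hKi : Integrable ((closedBall (0:ℂ) ρ).indicator (fun _ => C)) :=
    (integrable_indicator_iff measurableSet_closedBall).2
      (integrableOn_const hKc.measure_lt_top.ne)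
  have hI1 : Integrable (fun z => φ2 z * G z) := by
    refine hKi.mono' (hφ2c.measurable.mul hGm).aestronglyMeasurable
      (Eventually.of_forall fun z => ?_)
    by_cases hz : z ∈ ball (0:ℂ) ρ
    · rw [indicator_of_mem (ball_subset_closedBall hz), norm_mul]
      exact (hC z (ball_subset_closedBall hz)).1
    · simp only [(hφ0 z hz).2, zero_mul, norm_zero]
      refine indicator_nonneg (fun w hw => ?_) z
      exact le_trans (by positivity) (hC w hw).1
  refine ⟨hI1, ?_⟩
  set T := {z | G z ≠ 0} with hT
  set d : ℕ → ℝ := fun k => 1 / ((k:ℝ) + 1) with hd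
  have hd0 : ∀ k, 0 < d k := fun k => by simp only [hd]; positivity
  have hdt : Tendsto d atTop (𝓝[>] 0) :=
    tendsto_nhdsWithin_iff.2 ⟨tendsto_one_div_add_atTop_nhds_zero_nat,
      Eventually.of_forall hd0⟩
  have hgl := fun k => glue isOpen_ball hGc hGW hGW hφ hφc hφD hφW (hd0 k)
  set b : ℕ → ℂ → ℂ := fun k z => φ2 z * (tau (d k) (normSq (G z))) * G z
      + φ z * (tau' (d k) (normSq (G z))) * (z ^ n * (starRingEnd ℂ) (G z)
        + G z * (starRingEnd ℂ) (m z - s z)) * G z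
      + φ z * (tau (d k) (normSq (G z))) * z ^ n with hb
  have hbi : ∀ k, Integrable (b k) := fun k => (hgl k).1
  have hb0 : ∀ k, ∫ z, b k z = 0 := fun k => (hgl k).2
  have hlim : Tendsto (fun k => ∫ z, b k z) atTop
      (nhds (∫ z, (φ2 z * G z + T.indicator (fun z => φ z * z ^ n) z))) := by
    refine tendsto_integral_of_dominated_convergence
      (fun z => (closedBall (0:ℂ) ρ).indicator (fun _ => C) z +
        C * (ball 0 ρ ∩ T).indicator (fun z => ‖s z‖ ^ 2) z)
      (fun k => (hbi k).aestronglyMeasurable) (hKi.add (hen.const_mul C)) ?_ ?_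
    · intro k
      refine Eventually.of_forall fun z => ?_
      by_cases hz : z ∈ ball (0:ℂ) ρ
      · obtain ⟨t1, t2, t3, t4⟩ := tau_bounds (hd0 k) (normSq_nonneg (G z))
        obtain ⟨c1, c2, c3⟩ := hC z (ball_subset_closedBall hz)
        have hC0 : 0 ≤ C := le_trans (by positivity) c1
        rw [indicator_of_mem (ball_subset_closedBall hz)]
        by_cases hzT : z ∈ T
        · rw [indicator_of_mem (show z ∈ ball 0 ρ ∩ T from ⟨hz, hzT⟩)]
          have n1 : ‖φ2 z * (tau (d k) (normSq (G z))) * G z‖ ≤ ‖φ2 z‖ * ‖G z‖ := by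
            simp only [norm_mul, norm_real, Real.norm_eq_abs, abs_of_nonneg t1]
            have : 0 ≤ ‖φ2 z‖ * ‖G z‖ := by positivity
            nlinarith
          have n3 : ‖φ z * (tau (d k) (normSq (G z))) * z ^ n‖ ≤ ‖φ z‖ * ‖z ^ n‖ := by
            rw [norm_mul, norm_mul, norm_real, Real.norm_eq_abs, abs_of_nonneg t1]
            have : 0 ≤ ‖φ z‖ * ‖z ^ n‖ := by positivity
            nlinarith
          have n2 : ‖φ z * (tau' (d k) (normSq (G z))) * (z ^ n * (starRingEnd ℂ) (G z)
              + G z * (starRingEnd ℂ) (m z - s z)) * G z‖ ≤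
              2 * ‖φ z‖ * (‖z ^ n‖ + (‖m z‖ + ‖s z‖)) := by
            have a1 : ‖z ^ n * (starRingEnd ℂ) (G z) + G z * (starRingEnd ℂ) (m z - s z)‖ ≤
                ‖G z‖ * (‖z ^ n‖ + (‖m z‖ + ‖s z‖)) := by
              refine (norm_add_le _ _).trans ?_
              rw [norm_mul, norm_mul, RCLike.norm_conj, RCLike.norm_conj]
              have := norm_sub_le (m z) (s z)
              have h0 := norm_nonneg (G z)
              nlinarith
            rw [norm_mul, norm_mul, norm_mul, norm_real, Real.norm_eq_abs, abs_of_nonneg t3]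
            calc _ ≤ ‖φ z‖ * tau' (d k) (normSq (G z)) *
                  (‖G z‖ * (‖z ^ n‖ + (‖m z‖ + ‖s z‖))) * ‖G z‖ := by gcongr
              _ = (tau' (d k) (normSq (G z)) * normSq (G z)) *
                  (‖φ z‖ * (‖z ^ n‖ + (‖m z‖ + ‖s z‖))) := by
                rw [normSq_eq_norm_sq]; ring
              _ ≤ 2 * (‖φ z‖ * (‖z ^ n‖ + (‖m z‖ + ‖s z‖))) := by gcongr
              _ = _ := by ring
          have n4 : 2 * ‖φ z‖ * ‖s z‖ ≤ 2 * ‖φ z‖ + C * ‖s z‖ ^ 2 := by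
            have : ‖s z‖ ≤ 1 + ‖s z‖ ^ 2 := by nlinarith [sq_nonneg (‖s z‖ - 1)]
            calc 2 * ‖φ z‖ * ‖s z‖ ≤ 2 * ‖φ z‖ * (1 + ‖s z‖ ^ 2) := by gcongr
              _ = 2 * ‖φ z‖ + 2 * ‖φ z‖ * ‖s z‖ ^ 2 := by ring
              _ ≤ _ := by gcongr
          refine (norm_add₃_le).trans ?_
          linarith
        · have hG0 : G z = 0 := by simpa [hT] using hzT
          have : b k z = 0 := by
            simp [hb, hG0, tau_zero (hd0 k) (hd0 k).le]
          rw [this, norm_zero]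
          exact add_nonneg hC0 (mul_nonneg hC0 (indicator_nonneg (fun _ _ => by positivity) z))
      · have : b k z = 0 := by simp [hb, (hφ0 z hz).1, (hφ0 z hz).2]
        rw [this, norm_zero]
        have hC0 : 0 ≤ C := le_trans (by positivity) (hC 0 (by simp [hρ.le])).1
        exact add_nonneg (indicator_nonneg (fun _ _ => hC0) z)
          (mul_nonneg hC0 (indicator_nonneg (fun _ _ => by positivity) z))
    · refine Eventually.of_forall fun z => ?_
      by_cases hzT : z ∈ T
      · rw [indicator_of_mem hzT]
        have l1 : Tendsto (fun k => ((tau (d k) (normSq (G z)) : ℝ) : ℂ)) atTop (nhds ((1:ℝ):ℂ)) :=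
          (continuous_ofReal.tendsto _).comp ((tau_tendsto (normSq_pos.2 hzT)).comp hdt)
        have l2 : Tendsto (fun k => ((tau' (d k) (normSq (G z)) : ℝ) : ℂ)) atTop (nhds ((0:ℝ):ℂ)) :=
          (continuous_ofReal.tendsto _).comp ((tau'_tendsto (normSq_nonneg _)).comp hdt)
        have := (((l1.const_mul (φ2 z)).mul_const (G z)).add
          (((l2.const_mul (φ z)).mul_const (z ^ n * (starRingEnd ℂ) (G z)
            + G z * (starRingEnd ℂ) (m z - s z))).mul_const (G z))).add
          ((l1.const_mul (φ z)).mul_const (z ^ n))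
        simp only [hb]
        simpa using this
      · have hG0 : G z = 0 := by simpa [hT] using hzT
        rw [indicator_of_notMem hzT]
        have : ∀ k, b k z = 0 := fun k => by
          simp [hb, hG0, tau_zero (hd0 k) (hd0 k).le]
        simp [this, hG0]
  simp only [hb0] at hlim
  exact (tendsto_nhds_unique hlim tendsto_const_nhds)


open MeasureTheory in
theorem weak_identity2 {r : ℝ} (hr : 0 < r) {n : ℕ} {Ω : Set ℂ} (hΩ : IsOpen Ω) {F : ℂ → ℂ}
    (hFm : Measurable F)
    (hF : ContinuousOn F (ball 0 r)) (hFd : DifferentiableOn ℂ F Ω)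
    (hFE : ∀ z ∈ ball 0 r, z ∉ Ω → F z = (starRingEnd ℂ) z * z ^ n)
    {φ φ1 φ2 : ℂ → ℂ} (hφ : ContDiff ℝ 1 φ) (hφc : HasCompactSupport φ)
    (hφD : tsupport φ ⊆ ball 0 r) (hφW : ∀ z, HasW φ (φ1 z) (φ2 z) z) :
    ∫ z, (φ2 z * F z +
      {z | (starRingEnd ℂ) z * z ^ n - F z = 0}.indicator (fun z => φ z * z ^ n) z) = 0 := by
  obtain ⟨h1, h2⟩ := weak_identity hr hΩ hFm hF hFd hFE hφ hφc hφD hφW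
  have hcd : ContDiff ℝ 1 (fun z : ℂ => (starRingEnd ℂ) z * z ^ n) := by
    have : ContDiff ℝ 1 (fun z : ℂ => (starRingEnd ℂ) z) := conjCLE.contDiff
    fun_prop
  have hW : ∀ z : ℂ, HasW (fun z : ℂ => (starRingEnd ℂ) z * z ^ n)
      ((starRingEnd ℂ) z * (n * z ^ (n-1))) (z ^ n) z := by
    intro z
    have h1 : HasW (fun z : ℂ => (starRingEnd ℂ) z) _ _ z :=
        (HasW.of_hasDerivAt (hasDerivAt_id z)).conj
    simpa using h1.mul (HasW.of_hasDerivAt (hasDerivAt_pow n z))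
  obtain ⟨-, -, h3, h4⟩ := integral_dbar_zero (hφ.mul hcd) hφc.mul_right
    (fun z => (hφW z).mul (hW z))
  have hGm : Measurable (fun z => (starRingEnd ℂ) z * z ^ n - F z) := hcd.continuous.measurable.sub hFm
  have hT : MeasurableSet {z | (starRingEnd ℂ) z * z ^ n - F z ≠ 0} :=
    hGm (measurableSet_singleton 0).compl
  have h5 : Integrable (fun z => φ z * z ^ n) :=
    (hφ.continuous.mul (continuous_pow n)).integrable_of_hasCompactSupport hφc.mul_right
  have h6 := h1.add (h5.indicator hT)
  have h7 := integral_sub h3 h6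
  simp only [Pi.add_apply] at h7
  rw [h4, h2, sub_zero] at h7
  refine Eq.trans (integral_congr_ae (Eventually.of_forall fun z => ?_)) h7
  simp only
  by_cases hz : (starRingEnd ℂ) z * z ^ n - F z = 0
  · rw [indicator_of_mem (by simpa using hz), indicator_of_notMem (by simpa using hz)]
    linear_combination (- φ2 z) * hz + φ2 z * hz
  · rw [indicator_of_notMem (by simpa using hz), indicator_of_mem (by simpa using hz)]
    ring

open MeasureTheory in
theorem integrable_indicator_rpow (R : ℝ) {α : ℝ} (hα : α < 2) :
    Integrable ((ball (0:ℂ) R).indicator (fun w : ℂ => ‖w‖ ^ (-α))) := by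
  rw [integrable_indicator_iff measurableSet_ball]
  refine integrableOn_ball_of_norm_le_rpow (C := 1) (α := α) (by simp) (by simpa using hα) ?_ ?_
  · refine Eventually.of_forall fun w => ?_
    rw [Real.norm_of_nonneg (by positivity), one_mul]
  · exact (measurable_norm.pow_const _).aestronglyMeasurable

open MeasureTheory in
theorem cauchy_dom {N : ℂ → ℂ} {M R : ℝ} (hM : 0 ≤ M) (hNb : ∀ z, ‖N z‖ ≤ M)
    (hN0 : ∀ z, z ∉ ball (0:ℂ) R → N z = 0) (z : ℂ) :
    ∃ g : ℂ → ℝ, Integrable g ∧ ∀ ζ, ‖N ζ‖ * ‖ζ - z‖⁻¹ ≤ g ζ := by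
  refine ⟨fun ζ => M * (ball (0:ℂ) (R + ‖z‖)).indicator (fun w : ℂ => ‖w‖ ^ (-(1:ℝ))) (ζ - z),
    ((integrable_indicator_rpow _ one_lt_two).comp_sub_right z).const_mul M, ?_⟩
  intro ζ
  by_cases h : ζ ∈ ball (0:ℂ) R
  · have : ζ - z ∈ ball (0:ℂ) (R + ‖z‖) := by
      simp at h ⊢
      exact (norm_sub_le _ _).trans_lt (by linarith)
    simp only [indicator_of_mem this, Real.rpow_neg_one]
    gcongr
    exact hNb _
  · simp only [hN0 ζ h, norm_zero, zero_mul]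
    exact mul_nonneg hM (indicator_nonneg (fun _ _ => by positivity) _)

open MeasureTheory in
theorem cauchy_integrable {N : ℂ → ℂ} {M R : ℝ} (hM : 0 ≤ M) (hNm : Measurable N)
    (hNb : ∀ z, ‖N z‖ ≤ M)
    (hN0 : ∀ z, z ∉ ball (0:ℂ) R → N z = 0) (z : ℂ) :
    Integrable (fun ζ => N ζ / (ζ - z)) := by
  obtain ⟨g, hg, hgb⟩ := cauchy_dom hM hNb hN0 z
  refine hg.mono' (hNm.div (measurable_id.sub_const z)).aestronglyMeasurable (Eventually.of_forall fun ζ => ?_)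
  rw [norm_div, div_eq_mul_inv]
  exact hgb ζ

open MeasureTheory in
theorem cauchy_cont {N : ℂ → ℂ} {M R : ℝ} (hR : 0 < R) (hM : 0 ≤ M) (hNm : Measurable N)
    (hNb : ∀ z, ‖N z‖ ≤ M)
    (hN0 : ∀ z, z ∉ ball (0:ℂ) R → N z = 0) :
    Tendsto (fun z => ∫ ζ, N ζ / (ζ - z)) (nhds 0) (nhds (∫ ζ, N ζ / ζ)) := by
  set h : ℂ → ℝ := (ball (0:ℂ) (2 * R)).indicator (fun w : ℂ => ‖w‖ ^ (-(3/2:ℝ))) with hh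
  have hi : Integrable h := integrable_indicator_rpow _ (by norm_num)
  have hint : ∀ z, Integrable (fun ζ => N ζ / (ζ - z)) := cauchy_integrable hM hNm hNb hN0
  have hint0 : Integrable (fun ζ => N ζ / ζ) := by simpa using hint 0
  have hest : ∀ z ∈ ball (0:ℂ) R, ‖(∫ ζ, N ζ / (ζ - z)) - ∫ ζ, N ζ / ζ‖ ≤
      √‖z‖ * (2 * M * ∫ w, h w) := by
    intro z hz
    rw [← integral_sub (hint z) hint0]
    have hi2 : Integrable (fun ζ => √‖z‖ * M * (h (ζ - z) + h ζ)) :=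
      ((hi.comp_sub_right z).add hi).const_mul _
    refine (norm_integral_le_of_norm_le hi2 ?_).trans (le_of_eq ?_)
    · have hae : ∀ᵐ ζ : ℂ, ζ ≠ 0 ∧ ζ ≠ z := by
        filter_upwards [Measure.ae_ne volume (0:ℂ), Measure.ae_ne volume z] with ζ a b
        exact ⟨a, b⟩
      filter_upwards [hae] with ζ ⟨h0, h1⟩
      by_cases hζ : ζ ∈ ball (0:ℂ) R
      · have m1 : ζ - z ∈ ball (0:ℂ) (2 * R) := by
          simp at hζ hz ⊢
          exact (norm_sub_le _ _).trans_lt (by linarith)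
        have m2 : ζ ∈ ball (0:ℂ) (2 * R) := ball_subset_ball (by linarith) hζ
        simp only [hh, indicator_of_mem m1, indicator_of_mem m2]
        have h1' : ζ - z ≠ 0 := sub_ne_zero.2 h1
        have e1 : N ζ / (ζ - z) - N ζ / ζ = N ζ * (z / ((ζ - z) * ζ)) := by
          field_simp; ring
        rw [e1, norm_mul, norm_div, norm_mul]
        have ha : 0 < ‖ζ - z‖ := norm_pos_iff.2 h1'
        have hb : 0 < ‖ζ‖ := norm_pos_iff.2 h0
        have hab : ‖z‖ ≤ ‖ζ - z‖ + ‖ζ‖ := by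
          have := norm_sub_le ζ (ζ - z)
          simp at this; linarith
        have sq : √‖z‖ ≤ √‖ζ - z‖ + √‖ζ‖ :=
          by
          rw [Real.sqrt_le_left (by positivity)]
          nlinarith [Real.sq_sqrt ha.le, Real.sq_sqrt hb.le,
            mul_nonneg (Real.sqrt_nonneg ‖ζ - z‖) (Real.sqrt_nonneg ‖ζ‖)]
        have ep : ∀ x : ℝ, 0 < x → x ^ (-(3/2:ℝ)) = ((√x)⁻¹) ^ 3 := by
          intro x hx
          rw [Real.sqrt_eq_rpow, ← Real.rpow_neg hx.le, ← Real.rpow_natCast, ← Real.rpow_mul hx.le]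
          norm_num
        rw [ep _ ha, ep _ hb]
        set a := √‖ζ - z‖ with hadef
        set b := √‖ζ‖ with hbdef
        have ha2 : ‖ζ - z‖ = a ^ 2 := (Real.sq_sqrt ha.le).symm
        have hb2 : ‖ζ‖ = b ^ 2 := (Real.sq_sqrt hb.le).symm
        have hz2 : ‖z‖ = √‖z‖ ^ 2 := (Real.sq_sqrt (norm_nonneg _)).symm
        have ha0 : 0 < a := Real.sqrt_pos.2 ha
        have hb0 : 0 < b := Real.sqrt_pos.2 hb
        rw [ha2, hb2]
        have key : ‖z‖ / (a ^ 2 * b ^ 2) ≤ √‖z‖ * (a⁻¹ ^ 3 + b⁻¹ ^ 3) := by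
          have hp : 0 < a⁻¹ := inv_pos.2 ha0
          have hq : 0 < b⁻¹ := inv_pos.2 hb0
          calc ‖z‖ / (a ^ 2 * b ^ 2) = √‖z‖ * (√‖z‖ / (a ^ 2 * b ^ 2)) := by
                conv_lhs => rw [hz2]
                ring
            _ ≤ √‖z‖ * ((a + b) / (a ^ 2 * b ^ 2)) := by gcongr
            _ = √‖z‖ * (a⁻¹ * b⁻¹ ^ 2 + a⁻¹ ^ 2 * b⁻¹) := by field_simp
            _ ≤ _ := by
                refine mul_le_mul_of_nonneg_left ?_ (Real.sqrt_nonneg _)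
                nlinarith [mul_nonneg (add_pos hp hq).le (sq_nonneg (a⁻¹ - b⁻¹))]
        calc ‖N ζ‖ * (‖z‖ / (a ^ 2 * b ^ 2)) ≤ M * (√‖z‖ * (a⁻¹ ^ 3 + b⁻¹ ^ 3)) := by
              gcongr
              exact hNb ζ
          _ = _ := by ring
      · simp only [hN0 ζ hζ, zero_div, sub_zero, norm_zero]
        have : ∀ w, 0 ≤ h w := fun w => indicator_nonneg (fun _ _ => by positivity) w
        have p1 := this ζ
        have p2 := this (ζ - z)
        positivity
    · rw [integral_const_mul, integral_add (hi.comp_sub_right z) hi, integral_sub_right_eq_self h]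
      ring
  rw [tendsto_iff_norm_sub_tendsto_zero]
  refine squeeze_zero' (Eventually.of_forall fun _ => norm_nonneg _)
    (Eventually.mono (ball_mem_nhds 0 hR) hest) ?_
  have : Continuous (fun z : ℂ => √‖z‖ * (2 * M * ∫ w, h w)) := by fun_prop
  simpa using this.tendsto 0


/-- regularised Cauchy kernel -/
noncomputable def kk (ε : ℝ) (w : ℂ) : ℂ := (starRingEnd ℂ) w * (((‖w‖ ^ 2 + ε)⁻¹ : ℝ) : ℂ)

theorem kk_hasW {ε : ℝ} (hε : 0 < ε) (z ζ : ℂ) :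
    ∃ a, HasW (fun ζ => kk ε (ζ - z)) a (((ε / (‖ζ - z‖ ^ 2 + ε) ^ 2 : ℝ)) : ℂ) ζ := by
  have h1 : HasW (fun ζ : ℂ => ζ - z) 1 0 ζ := HasW.of_hasDerivAt ((hasDerivAt_id ζ).sub_const z)
  have h2 : HasW (fun ζ : ℂ => (starRingEnd ℂ) (ζ - z)) 0 1 ζ := by simpa using h1.conj
  have h3 := h1.mul h2
  have hpos : 0 < ‖ζ - z‖ ^ 2 + ε := by positivity
  have hre : ∀ w : ℂ, (w * (starRingEnd ℂ) w).re = ‖w‖ ^ 2 := by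
    intro w
    rw [mul_conj, normSq_eq_norm_sq, ofReal_re]
  have ht : HasDerivAt (fun t : ℝ => (t + ε)⁻¹) (-1 / (‖ζ - z‖ ^ 2 + ε) ^ 2)
      ((ζ - z) * (starRingEnd ℂ) (ζ - z)).re := by
    rw [hre]
    exact ((hasDerivAt_id (‖ζ - z‖ ^ 2)).add_const ε).inv hpos.ne'
  have h4 := h3.real_comp (by simp) ht
  have h5 := h2.mul h4
  simp only [hre] at h5
  have e : (1 * (((‖ζ - z‖ ^ 2 + ε)⁻¹ : ℝ) : ℂ) + (starRingEnd ℂ) (ζ - z) *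
      (((-1 / (‖ζ - z‖ ^ 2 + ε) ^ 2 : ℝ) : ℂ) * (0 * (starRingEnd ℂ) (ζ - z) + (ζ - z) * 1))) =
      (((ε / (‖ζ - z‖ ^ 2 + ε) ^ 2 : ℝ)) : ℂ) := by
    have hc : ((‖ζ - z‖ ^ 2 + ε : ℝ) : ℂ) ≠ 0 := by exact_mod_cast hpos.ne'
    have hm : (starRingEnd ℂ) (ζ - z) * (ζ - z) = ((‖ζ - z‖ ^ 2 : ℝ) : ℂ) := by
      rw [mul_comm, mul_conj, normSq_eq_norm_sq]
    push_cast at hc hm ⊢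
    field_simp
    linear_combination -hm
  rw [e] at h5
  exact ⟨_, h5⟩

theorem kk_contDiff {ε : ℝ} (hε : 0 < ε) (z : ℂ) : ContDiff ℝ 1 (fun ζ => kk ε (ζ - z)) := by
  unfold kk
  have h0 : ContDiff ℝ 1 (fun ζ : ℂ => ζ - z) := by fun_prop
  have h1 : ContDiff ℝ 1 (fun ζ : ℂ => (starRingEnd ℂ) (ζ - z)) := conjCLE.contDiff.comp h0
  have h2 : ContDiff ℝ 1 (fun ζ : ℂ => (‖ζ - z‖ ^ 2 + ε)⁻¹) := by
    refine ContDiff.inv ?_ (fun w => by positivity)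
    exact (h0.norm_sq ℝ).add contDiff_const
  exact h1.mul (ofRealCLM.contDiff.comp h2)

theorem kk_norm {ε : ℝ} (hε : 0 < ε) (w : ℂ) : ‖kk ε w‖ ≤ ‖w‖⁻¹ := by
  unfold kk
  rw [norm_mul, RCLike.norm_conj, norm_real, Real.norm_of_nonneg (by positivity)]
  rcases eq_or_ne w 0 with rfl | hw
  · simp
  have : 0 < ‖w‖ := norm_pos_iff.2 hw
  rw [← div_eq_mul_inv, div_le_iff₀ (by positivity)]
  have : ‖w‖⁻¹ * (‖w‖ ^ 2 + ε) = ‖w‖ + ‖w‖⁻¹ * ε := by field_simp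
  rw [this]
  have : 0 < ‖w‖⁻¹ * ε := by positivity
  linarith

theorem kk_tendsto {w : ℂ} (hw : w ≠ 0) :
    Tendsto (fun c : ℝ => kk ((c ^ 2)⁻¹) w) atTop (nhds w⁻¹) := by
  have h1 : Tendsto (fun c : ℝ => (c ^ 2)⁻¹) atTop (nhds 0) :=
    (tendsto_pow_atTop two_ne_zero).inv_tendsto_atTop
  have h2 : Tendsto (fun c : ℝ => (‖w‖ ^ 2 + (c ^ 2)⁻¹)⁻¹) atTop (nhds ((‖w‖ ^ 2 + 0)⁻¹)) :=
    (h1.const_add _).inv₀ (by simpa using hw)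
  have h3 := ((continuous_ofReal.tendsto _).comp h2).const_mul ((starRingEnd ℂ) w)
  have e : w⁻¹ = (starRingEnd ℂ) w * (((‖w‖ ^ 2 + 0)⁻¹ : ℝ) : ℂ) := by
    rw [add_zero, ← normSq_eq_norm_sq, Complex.inv_def]
  rw [e]
  exact h3

open MeasureTheory in
theorem psi_facts : Integrable (fun w : ℂ => 1 / (1 + ‖w‖ ^ 2) ^ 2) ∧
    0 < ∫ w : ℂ, 1 / (1 + ‖w‖ ^ 2) ^ 2 := by
  have h1 : Integrable (fun w : ℂ => 1 / (1 + ‖w‖ ^ 2) ^ 2) := by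
    have := integrable_rpow_neg_one_add_norm_sq (E := ℂ) (μ := volume) (r := 4) (by simp; norm_num)
    refine this.congr (Eventually.of_forall fun w => ?_)
    simp only
    rw [show (-4/2 : ℝ) = -((2:ℕ):ℝ) by norm_num, Real.rpow_neg (by positivity), Real.rpow_natCast,
      one_div]
  refine ⟨h1, ?_⟩
  rw [integral_pos_iff_support_of_nonneg (fun w => by positivity) h1]
  have : Function.support (fun w : ℂ => 1 / (1 + ‖w‖ ^ 2) ^ 2) = univ := by
    ext w
    simp only [Function.mem_support, mem_univ, iff_true]
    positivity
  rw [this]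
  simp

open MeasureTheory in
theorem approx_id {g : ℂ → ℂ} (hg : Integrable g) {z : ℂ} (hz : ContinuousAt g z) :
    Tendsto (fun c : ℝ => ∫ ζ, (((c ^ 2)⁻¹ / (‖ζ - z‖ ^ 2 + (c ^ 2)⁻¹) ^ 2 : ℝ) : ℂ) * g ζ) atTop
      (nhds (((∫ w : ℂ, 1 / (1 + ‖w‖ ^ 2) ^ 2 : ℝ) : ℂ) * g z)) := by
  obtain ⟨h1, h2⟩ := psi_facts
  set c0 : ℝ := ∫ w : ℂ, 1 / (1 + ‖w‖ ^ 2) ^ 2 with hc0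
  have h3 := tendsto_integral_comp_smul_smul_of_integrable' (μ := (volume : Measure ℂ))
    (φ := fun w : ℂ => c0⁻¹ * (1 / (1 + ‖w‖ ^ 2) ^ 2)) (g := g) (x₀ := z)
    (fun w => by positivity) (by rw [integral_const_mul, ← hc0, inv_mul_cancel₀ h2.ne']) ?_ hg hz
  · have h4 := h3.const_mul (c0 : ℂ)
    refine h4.congr' ?_
    filter_upwards [eventually_gt_atTop 0] with c hc
    rw [← integral_const_mul]
    congr 1
    ext ζ
    rw [real_smul, ← mul_assoc, ← ofReal_mul]
    congr 2
    rw [finrank_real_complex, norm_smul, norm_sub_rev z ζ, Real.norm_of_nonneg hc.le]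
    have : 0 < c0 := h2
    have : 1 + (c * ‖ζ - z‖) ^ 2 ≠ 0 := by positivity
    have : ‖ζ - z‖ ^ 2 + (c ^ 2)⁻¹ ≠ 0 := by positivity
    field_simp
    ring
  · rw [finrank_real_complex]
    have hn : Tendsto (fun w : ℂ => ‖w‖) (Bornology.cobounded ℂ) atTop := tendsto_norm_cobounded_atTop
    have h5 : Tendsto (fun t : ℝ => c0⁻¹ * (t ^ 2)⁻¹) atTop (nhds (c0⁻¹ * 0)) :=
      ((tendsto_pow_atTop two_ne_zero).inv_tendsto_atTop).const_mul _
    rw [mul_zero] at h5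
    refine squeeze_zero (fun w => by positivity) (fun w => ?_) (h5.comp hn)
    simp only [Function.comp]
    rcases eq_or_ne w 0 with rfl | hw
    · simp
    have hp : 0 < ‖w‖ := norm_pos_iff.2 hw
    have : 0 < c0 := h2
    have e : ‖w‖ ^ 2 * (c0⁻¹ * (1 / (1 + ‖w‖ ^ 2) ^ 2)) = c0⁻¹ * (‖w‖ ^ 2 / (1 + ‖w‖ ^ 2) ^ 2) := by
      ring
    rw [e]
    gcongr
    rw [div_le_iff₀ (by positivity), inv_mul_eq_div, le_div_iff₀ (by positivity)]
    nlinarith [sq_nonneg ‖w‖]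


open MeasureTheory in
theorem representation {r : ℝ} (hr : 0 < r) {n : ℕ} {Ω : Set ℂ} (hΩ : IsOpen Ω) {F : ℂ → ℂ}
    (hFm : Measurable F)
    (hF : ContinuousOn F (ball 0 r)) (hFd : DifferentiableOn ℂ F Ω)
    (hFE : ∀ z ∈ ball 0 r, z ∉ Ω → F z = (starRingEnd ℂ) z * z ^ n) :
    ∃ μ : ℂ → ℂ, ∃ M : ℝ, 0 ≤ M ∧ Measurable μ ∧ (∀ z, ‖μ z‖ ≤ M) ∧
      (∀ z, z ∉ ball (0:ℂ) r → μ z = 0) ∧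
      ∀ z ∈ ball (0:ℂ) (r / 8), F z = ∫ ζ, (ζ ^ n * μ ζ) / (ζ - z) := by
  let χ : ContDiffBump (0:ℂ) := ⟨r / 4, r / 2, by positivity, by linarith⟩
  set X : ℂ → ℂ := fun z => ((χ z : ℝ) : ℂ) with hX
  have hXd : ContDiff ℝ 1 X := ofRealCLM.contDiff.comp χ.contDiff
  have hXsupp : tsupport X ⊆ closedBall 0 (r / 2) := by
    have h1 : tsupport X ⊆ tsupport (χ : ℂ → ℝ) :=
      closure_mono (fun z hz h0 => hz (by simp [hX, h0]))
    rwa [χ.tsupport_eq] at h1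
  have hKr : closedBall (0:ℂ) (r / 2) ⊆ ball 0 r := closedBall_subset_ball (by linarith)
  have hXc : HasCompactSupport X :=
    (isCompact_closedBall (0:ℂ) (r / 2)).of_isClosed_subset (isClosed_tsupport _) hXsupp
  have hXex : ∀ z, ∃ a b, HasW X a b z := fun z =>
    HasW.exists (hXd.differentiable one_ne_zero z)
  choose X1 X2 hXW using hXex
  obtain ⟨hX2c, hX2s, -, -⟩ := integral_dbar_zero hXd hXc hXW
  have hX20 : ∀ z ∈ ball (0:ℂ) (r / 4), X2 z = 0 := by
    intro z hz
    have h1 : X =ᶠ[nhds z] fun _ => 1 := by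
      filter_upwards [isOpen_ball.mem_nhds hz] with w hw
      have : χ w = 1 := χ.one_of_mem_closedBall (ball_subset_closedBall hw)
      simp [hX, this]
    have h2 := (HasW.const 1 z).congr_of_eventuallyEq h1
    rw [(hXW z).unique, ← h2.unique]
  have hX0 : ∀ z, z ∉ closedBall (0:ℂ) (r / 2) → X z = 0 ∧ X2 z = 0 := by
    intro z hz
    have h1 := (notMem_tsupport_iff_eventuallyEq).1 (fun h => hz (hXsupp h) : z ∉ tsupport X)
    refine ⟨h1.self_of_nhds, ?_⟩
    have h2 := (HasW.const 0 z).congr_of_eventuallyEq h1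
    rw [(hXW z).unique, ← h2.unique]
  have hXle : ∀ z, ‖X z‖ ≤ 1 := fun z => by
    simp only [hX, norm_real, Real.norm_of_nonneg χ.nonneg]
    exact χ.le_one
  obtain ⟨CF, hCF⟩ := (isCompact_closedBall (0:ℂ) (r / 2)).exists_bound_of_continuousOn (hF.mono hKr)
  obtain ⟨C2, hC2⟩ := hX2s.exists_bound_of_continuous hX2c
  have hCF0 : 0 ≤ CF := (norm_nonneg _).trans (hCF 0 (by simp; positivity))
  have hC20 : 0 ≤ C2 := (norm_nonneg _).trans (hC2 0)
  set E : Set ℂ := {z | (starRingEnd ℂ) z * z ^ n - F z = 0} with hE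
  have hEm : MeasurableSet E := by
    have : Measurable (fun z : ℂ => (starRingEnd ℂ) z * z ^ n) := by
      apply Continuous.measurable; fun_prop
    exact (this.sub hFm) (measurableSet_singleton 0)
  set ν : ℂ → ℂ := fun z => F z * X2 z / z ^ n + E.indicator X z with hν
  have hνm : Measurable ν :=
    ((hFm.mul hX2c.measurable).div (measurable_id.pow_const n)).add
      (hXd.continuous.measurable.indicator hEm)
  set M0 : ℝ := CF * C2 / (r / 4) ^ n + 1 with hM0
  have hM0p : 0 ≤ M0 := by positivity
  have hνb : ∀ z, ‖ν z‖ ≤ M0 := by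
    intro z
    refine (norm_add_le _ _).trans (add_le_add ?_ ?_)
    · by_cases h1 : z ∈ closedBall (0:ℂ) (r / 2)
      · by_cases h2 : z ∈ ball (0:ℂ) (r / 4)
        · simp only [hX20 z h2, mul_zero, zero_div, norm_zero]; positivity
        · rw [norm_div, norm_mul, norm_pow]
          have : r / 4 ≤ ‖z‖ := by simpa using h2
          gcongr
          · exact hCF z h1
          · exact hC2 z
      · simp only [(hX0 z h1).2, mul_zero, zero_div, norm_zero]; positivity
    · exact (norm_indicator_le_norm_self _ _).trans (hXle z)
  have hν0 : ∀ z, z ∉ ball (0:ℂ) r → ν z = 0 := by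
    intro z hz
    have h1 : z ∉ closedBall (0:ℂ) (r / 2) := fun h => hz (hKr h)
    simp [hν, indicator, (hX0 z h1).1, (hX0 z h1).2]
  have hνN : ∀ z, z ^ n * ν z = F z * X2 z + E.indicator (fun z => X z * z ^ n) z := by
    intro z
    have e2 : E.indicator (fun z => X z * z ^ n) z = z ^ n * E.indicator X z := by
      by_cases h : z ∈ E <;> simp [h, mul_comm]
    rw [e2]
    rcases eq_or_ne z 0 with rfl | hz
    · have := hX20 0 (by simp; positivity)
      simp [hν, this]
    · simp only [hν]
      field_simp
  set N : ℂ → ℂ := fun z => z ^ n * ν z with hN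
  have hNm : Measurable N := (measurable_id.pow_const n).mul hνm
  have hNb : ∀ z, ‖N z‖ ≤ r ^ n * M0 := by
    intro z
    by_cases hz : z ∈ ball (0:ℂ) r
    · simp only [hN, norm_mul, norm_pow]
      have : ‖z‖ ≤ r := by simpa using (mem_ball.1 hz).le
      gcongr
      exact hνb z
    · simp only [hN, hν0 z hz, mul_zero, norm_zero]; positivity
  have hN0 : ∀ z, z ∉ ball (0:ℂ) r → N z = 0 := fun z hz => by simp [hN, hν0 z hz]
  -- the function `X F`
  have hgi : Integrable (fun z => X z * F z) := by
    have hKi : Integrable ((closedBall (0:ℂ) (r / 2)).indicator (fun _ => CF)) :=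
      (integrable_indicator_iff measurableSet_closedBall).2
        (integrableOn_const (isCompact_closedBall _ _).measure_lt_top.ne)
    refine hKi.mono' (hXd.continuous.measurable.mul hFm).aestronglyMeasurable
      (Eventually.of_forall fun z => ?_)
    by_cases hz : z ∈ closedBall (0:ℂ) (r / 2)
    · rw [indicator_of_mem hz, norm_mul]
      have := hXle z
      have := hCF z hz
      nlinarith [norm_nonneg (F z), norm_nonneg (X z)]
    · rw [indicator_of_notMem hz]
      simp [(hX0 z hz).1]
  obtain ⟨-, hc0⟩ := psi_facts
  set c0 : ℝ := ∫ w : ℂ, 1 / (1 + ‖w‖ ^ 2) ^ 2 with hc0d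
  have hc0' : (c0 : ℂ) ≠ 0 := by exact_mod_cast hc0.ne'
  have main : ∀ z ∈ ball (0:ℂ) (r / 8), (c0 : ℂ) * F z + ∫ ζ, N ζ / (ζ - z) = 0 := by
    intro z hz
    have hXz : X z = 1 := by
      have : χ z = 1 := χ.one_of_mem_closedBall
        (ball_subset_closedBall (ball_subset_ball (by change r / 8 ≤ r / 4; linarith) hz))
      simp [hX, this]
    have hcz : ContinuousAt (fun z => X z * F z) z := by
      refine hXd.continuous.continuousAt.mul (hF.continuousAt (isOpen_ball.mem_nhds ?_))
      exact ball_subset_ball (by linarith) hz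
    have l1 := approx_id hgi hcz
    simp only [hXz, one_mul] at l1
    obtain ⟨g, hg, hgb⟩ := cauchy_dom (by positivity) hNb hN0 z
    have hbd : ∀ ε > 0, ∀ ζ, ‖N ζ * kk ε (ζ - z)‖ ≤ g ζ := by
      intro ε hε ζ
      rw [norm_mul]
      exact (mul_le_mul_of_nonneg_left (kk_norm hε _) (norm_nonneg _)).trans (hgb ζ)
    have hms : ∀ ε > 0, AEStronglyMeasurable (fun ζ => N ζ * kk ε (ζ - z)) := fun ε hε =>
      (hNm.mul (kk_contDiff hε z).continuous.measurable).aestronglyMeasurable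
    have l2 : Tendsto (fun c : ℝ => ∫ ζ, N ζ * kk ((c ^ 2)⁻¹) (ζ - z)) atTop
        (nhds (∫ ζ, N ζ / (ζ - z))) := by
      refine tendsto_integral_filter_of_dominated_convergence g ?_ ?_ hg ?_
      · filter_upwards [eventually_gt_atTop 0] with c hc using hms _ (by positivity)
      · filter_upwards [eventually_gt_atTop 0] with c hc
        exact Eventually.of_forall (hbd _ (by positivity))
      · filter_upwards [Measure.ae_ne volume z] with ζ hζ
        rw [div_eq_mul_inv]
        exact (kk_tendsto (sub_ne_zero.2 hζ)).const_mul _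
    refine tendsto_nhds_unique (l1.add l2) (tendsto_const_nhds.congr' ?_)
    filter_upwards [eventually_gt_atTop 0] with c hc
    have hε : 0 < (c ^ 2)⁻¹ := by positivity
    set ε := (c ^ 2)⁻¹ with hεd
    choose K1 hK1 using kk_hasW hε z
    have hw := weak_identity2 hr hΩ hFm hF hFd hFE (hXd.mul (kk_contDiff hε z)) hXc.mul_right
      ((tsupport_mul_subset_left).trans (hXsupp.trans hKr))
      (fun ζ => (hXW ζ).mul (hK1 ζ))
    have i2 : Integrable (fun ζ => N ζ * kk ε (ζ - z)) :=
      hg.mono' (hms ε hε) (Eventually.of_forall (hbd ε hε))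
    have i1 : Integrable (fun ζ => ((ε / (‖ζ - z‖ ^ 2 + ε) ^ 2 : ℝ) : ℂ) * (X ζ * F ζ)) := by
      refine hgi.bdd_mul (c := ε⁻¹) ?_ (Eventually.of_forall fun ζ => ?_)
      · apply Continuous.aestronglyMeasurable
        apply continuous_ofReal.comp
        refine Continuous.div continuous_const (by fun_prop) (fun w => by positivity)
      · rw [norm_real, Real.norm_of_nonneg (by positivity), div_le_iff₀ (by positivity)]
        have : ε = ε⁻¹ * ε ^ 2 := by field_simp
        calc ε = ε⁻¹ * ε ^ 2 := this
          _ ≤ _ := by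
            gcongr
            have : 0 ≤ ‖ζ - z‖ ^ 2 := by positivity
            linarith
    rw [← integral_add i1 i2, ← hw]
    refine integral_congr_ae (Eventually.of_forall fun ζ => ?_)
    simp only
    rw [show N ζ = _ from hνN ζ]
    change _ + E.indicator _ ζ = _
    by_cases hζ : ζ ∈ E
    · rw [indicator_of_mem hζ, indicator_of_mem hζ]; ring
    · rw [indicator_of_notMem hζ, indicator_of_notMem hζ]; ring
  refine ⟨fun z => -(c0 : ℂ)⁻¹ * ν z, c0⁻¹ * M0, by positivity, hνm.const_mul _, ?_, ?_, ?_⟩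
  · intro z
    rw [norm_mul, norm_neg, norm_inv, norm_real, Real.norm_of_nonneg hc0.le]
    have := hνb z
    gcongr
  · intro z hz
    simp [hν0 z hz]
  · intro z hz
    have h1 := main z hz
    have h2 : ∀ ζ : ℂ, (ζ ^ n * (-(c0 : ℂ)⁻¹ * ν ζ)) / (ζ - z) = (-(c0 : ℂ)⁻¹) * (N ζ / (ζ - z)) := by
      intro ζ; simp only [hN]; ring
    simp only [h2]
    rw [integral_const_mul]
    have h3 : ∫ ζ, N ζ / (ζ - z) = -(c0 * F z) := by linear_combination h1
    rw [h3]
    field_simp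


theorem poly_vanish {l : Filter ℂ} [l.NeBot] (hl : Tendsto (fun z : ℂ => z) l (nhds 0))
    (hl0 : ∀ᶠ z in l, z ≠ 0) {B : ℂ → ℂ} {b : ℂ} (hB : Tendsto B l (nhds b)) (n : ℕ) :
    ∀ (a : ℕ → ℂ) (F : ℂ → ℂ), Tendsto (fun z => F z / z ^ n) l (nhds 0) →
      (∀ᶠ z in l, F z = (∑ k ∈ Finset.range n, a k * z ^ k) + z ^ n * B z) →
      (∀ k ∈ Finset.range n, a k = 0) ∧ b = 0 := by
  induction n with
  | zero =>
    intro a F h1 h2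
    refine ⟨by simp, tendsto_nhds_unique hB (h1.congr' ?_)⟩
    filter_upwards [h2] with z hz
    simp [hz]
  | succ n ih =>
    intro a F h1 h2
    set Q : ℂ → ℂ := fun z => (∑ k ∈ Finset.range n, a (k + 1) * z ^ k) + z ^ n * B z with hQ
    have hQF : ∀ᶠ z in l, F z = a 0 + z * Q z := by
      filter_upwards [h2] with z hz
      rw [hz, Finset.sum_range_succ', hQ]
      simp only [mul_add, Finset.mul_sum]
      have : ∀ k ∈ Finset.range n, a (k + 1) * z ^ (k + 1) = z * (a (k + 1) * z ^ k) := by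
        intro k _; ring
      rw [Finset.sum_congr rfl this]
      ring
    have hQl : ∃ q, Tendsto Q l (nhds q) := by
      have hc : Continuous (fun z : ℂ => ∑ k ∈ Finset.range n, a (k + 1) * z ^ k) := by fun_prop
      exact ⟨_, ((hc.tendsto 0).comp hl).add ((hl.pow n).mul hB)⟩
    obtain ⟨q, hq⟩ := hQl
    have hF0 : Tendsto F l (nhds 0) := by
      have := h1.mul (hl.pow (n + 1))
      rw [zero_mul] at this
      refine this.congr' ?_
      filter_upwards [hl0] with z hz
      field_simp
    have ha : a 0 = 0 := by
      have h3 := (hl.mul hq).const_add (a 0)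
      rw [zero_mul, add_zero] at h3
      exact tendsto_nhds_unique h3 (hF0.congr' hQF)
    obtain ⟨i1, i2⟩ := ih (fun k => a (k + 1)) (fun z => F z / z)
      (by
        refine h1.congr' ?_
        filter_upwards [hl0] with z hz
        rw [pow_succ', div_div])
      (by
        filter_upwards [hQF, hl0] with z hz h0
        rw [hz, ha, zero_add, mul_div_cancel_left₀ _ h0])
    refine ⟨?_, i2⟩
    intro k hk
    cases k with
    | zero => exact ha
    | succ k => exact i1 k (by simp at hk ⊢; omega)

open MeasureTheory in
theorem expansion {r : ℝ} (hr : 0 < r) {n : ℕ} {Ω : Set ℂ} (hΩ : IsOpen Ω) {F : ℂ → ℂ}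
    (hFm : Measurable F)
    (hF : ContinuousOn F (ball 0 r)) (hFd : DifferentiableOn ℂ F Ω)
    (hFE : ∀ z ∈ ball 0 r, z ∉ Ω → F z = (starRingEnd ℂ) z * z ^ n) :
    ∃ (a : ℕ → ℂ) (B : ℂ → ℂ) (b : ℂ), Tendsto B (nhds 0) (nhds b) ∧
      ∀ᶠ z in nhds 0, F z = (∑ k ∈ Finset.range n, a k * z ^ k) + z ^ n * B z := by
  obtain ⟨μ, M, hM, hμm, hμb, hμ0, hrep⟩ := representation hr hΩ hFm hF hFd hFE
  refine ⟨fun k => ∫ ζ, ζ ^ (n - 1 - k) * μ ζ, fun z => ∫ ζ, μ ζ / (ζ - z), _,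
    cauchy_cont hr hM hμm hμb hμ0, ?_⟩
  have hmi : ∀ j : ℕ, Integrable (fun ζ : ℂ => ζ ^ j * μ ζ) := by
    intro j
    have hKi : Integrable ((ball (0:ℂ) r).indicator (fun _ => r ^ j * M)) :=
      (integrable_indicator_iff measurableSet_ball).2
        (integrableOn_const measure_ball_lt_top.ne)
    refine hKi.mono' ((measurable_id.pow_const j).mul hμm).aestronglyMeasurable
      (Eventually.of_forall fun z => ?_)
    by_cases hz : z ∈ ball (0:ℂ) r
    · rw [indicator_of_mem hz, norm_mul, norm_pow]
      have : ‖z‖ ≤ r := by simpa using (mem_ball.1 hz).le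
      have := hμb z
      gcongr
    · rw [indicator_of_notMem hz]
      simp [hμ0 z hz]
  filter_upwards [ball_mem_nhds (0:ℂ) (show 0 < r / 8 by positivity)] with z hz
  rw [hrep z hz, ← integral_const_mul]
  simp only [← integral_mul_const]
  rw [← integral_finsetSum _ (fun i _ => (hmi _).mul_const _),
    ← integral_add (integrable_finsetSum _ (fun i _ => (hmi _).mul_const _))
      ((cauchy_integrable hM hμm hμb hμ0 z).const_mul _)]
  refine integral_congr_ae ?_
  filter_upwards [Measure.ae_ne volume z] with ζ hζ
  have h1 : ζ - z ≠ 0 := sub_ne_zero.2 hζ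
  have h2 := geom_sum₂_mul z ζ n
  have h3 : ∑ i ∈ Finset.range n, ζ ^ (n - 1 - i) * μ ζ * z ^ i =
      (∑ i ∈ Finset.range n, z ^ i * ζ ^ (n - 1 - i)) * μ ζ := by
    rw [Finset.sum_mul]
    exact Finset.sum_congr rfl fun i _ => by ring
  rw [h3]
  field_simp
  linear_combination μ ζ * h2

local notation "conj'" => starRingEnd ℂ

/-- If `S` is bounded holomorphic on `Ω`, continuous up to `Γ = ∂Ω ∩ D(0,r)` and
`S(ζ) = conj ζ · ζ^n` on `Γ`, then `S(z)/z^n → 0` as `z → 0` within `(Ω ∪ Γ) \ {0}`. -/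
theorem stmt_1 (r : ℝ) (hr : 0 < r) (Ω : Set ℂ) (hΩopen : IsOpen Ω) (hΩsub : Ω ⊆ ball 0 r)
    (h0 : (0 : ℂ) ∈ frontier Ω)
    (hacc : (0 : ℂ) ∈ closure ((frontier Ω ∩ ball 0 r) \ {0}))
    (n : ℕ) (hn : 0 < n) (S : ℂ → ℂ)
    (hShol : DifferentiableOn ℂ S Ω)
    (hScont : ContinuousOn S (Ω ∪ (frontier Ω ∩ ball 0 r)))
    (hSbdd : ∃ M : ℝ, ∀ z ∈ Ω, ‖S z‖ ≤ M)
    (hSbdry : ∀ ζ ∈ frontier Ω ∩ ball 0 r, S ζ = conj' ζ * ζ ^ n) :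
    Tendsto (fun z => S z / z ^ n)
      (nhdsWithin 0 ((Ω ∪ (frontier Ω ∩ ball 0 r)) \ {0})) (nhds 0) := by
  classical
  set Γ := frontier Ω ∩ ball (0:ℂ) r with hΓ
  set P : ℂ → ℂ := fun z => conj' z * z ^ n with hP
  have hPc : Continuous P := by simp only [hP]; fun_prop
  set F : ℂ → ℂ := Ω.piecewise S P with hFdef
  have hF1 : ∀ z ∈ Ω, F z = S z := fun z hz => piecewise_eq_of_mem _ _ _ hz
  have hF2 : ∀ z, z ∉ Ω → F z = P z := fun z hz => piecewise_eq_of_notMem _ _ _ hz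
  have hFm : Measurable F :=
    ContinuousOn.measurable_piecewise hShol.continuousOn hPc.continuousOn hΩopen.measurableSet
  have hFd : DifferentiableOn ℂ F Ω := hShol.congr hF1
  have hFc : ContinuousOn F (ball 0 r) := by
    intro x hx
    apply ContinuousAt.continuousWithinAt
    by_cases hxΩ : x ∈ Ω
    · exact (hFd.differentiableAt (hΩopen.mem_nhds hxΩ)).continuousAt
    · rw [← continuousWithinAt_univ, ← union_compl_self Ω]
      refine ContinuousWithinAt.union ?_ ?_
      · by_cases hcl : x ∈ closure Ω
        · have hxf : x ∈ Γ := ⟨by rw [hΩopen.frontier_eq]; exact ⟨hcl, hxΩ⟩, hx⟩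
          have h1 : ContinuousWithinAt S Ω x :=
            (hScont x (Or.inr hxf)).mono subset_union_left
          refine h1.congr hF1 ?_
          rw [hF2 x hxΩ, hSbdry x hxf]
        · exact continuousWithinAt_of_notMem_closure hcl
      · exact hPc.continuousWithinAt.congr (fun z hz => hF2 z hz) (hF2 x hxΩ)
  obtain ⟨a, B, b, hB, hexp⟩ := expansion hr hΩopen hFm hFc hFd (fun z _ hz => hF2 z hz)
  have hΓΩ : ∀ z ∈ Γ, z ∉ Ω := by
    intro z hz
    have := hz.1
    rw [hΩopen.frontier_eq] at this
    exact this.2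
  have hvan : (∀ k ∈ Finset.range n, a k = 0) ∧ b = 0 := by
    haveI : (nhdsWithin (0:ℂ) (Γ \ {0})).NeBot := mem_closure_iff_nhdsWithin_neBot.1 hacc
    have hle : nhdsWithin (0:ℂ) (Γ \ {0}) ≤ nhds 0 := nhdsWithin_le_nhds
    refine poly_vanish (l := nhdsWithin (0:ℂ) (Γ \ {0})) (tendsto_id.mono_left hle) ?_
      (hB.mono_left hle) n a F ?_ (hexp.filter_mono hle)
    · filter_upwards [self_mem_nhdsWithin] with z hz using hz.2
    · have h1 : Tendsto (fun z : ℂ => conj' z) (nhdsWithin (0:ℂ) (Γ \ {0})) (nhds 0) := by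
        have := continuous_conj.tendsto (0:ℂ)
        rw [map_zero] at this
        exact this.mono_left hle
      refine h1.congr' ?_
      filter_upwards [self_mem_nhdsWithin] with z hz
      have hz0 : z ≠ 0 := hz.2
      rw [hF2 z (hΓΩ z hz.1), hP]
      field_simp
  obtain ⟨ha, rfl⟩ := hvan
  refine (hB.mono_left nhdsWithin_le_nhds).congr' ?_
  filter_upwards [self_mem_nhdsWithin, hexp.filter_mono nhdsWithin_le_nhds] with z hz he
  have hz0 : z ≠ 0 := hz.2
  have hSF : S z = F z := by
    rcases hz.1 with h | h
    · exact (hF1 z h).symm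
    · rw [hF2 z (hΓΩ z h), hSbdry z h]
  rw [hSF, he, Finset.sum_eq_zero (fun k hk => by rw [ha k hk, zero_mul]), zero_add,
    mul_div_cancel_left₀ _ (pow_ne_zero n hz0)]
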